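/- There exists an absolute constant C > 0 such that for every 0 < r < 1 and all multi-indices α, β ∈ ℤ₊³ with β ≤ α, α₃ ≥ 1 and β₃ ≥ 1 (so that β + (0,1,−1) ∈ ℤ₊³), one has binom(α,β) · |α|^{−1} M_{r,α} / (M_{r,β+(0,1,−1)} · M_{r,α−β}) ≤ C/(|β|+1)⁴ + C/(|α|−|β|+1)⁴. -/

import Mathlib

/-- `|α| = α₁ + α₂ + α₃` for a multi-index `α ∈ ℤ₊³`. -/
def msize (α : ℕ × ℕ × ℕ) : ℕ := α.1 + α.2.1 + α.2.2

/-- Componentwise order on multi-indices: `β ≤ α`. -/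
def mle (β α : ℕ × ℕ × ℕ) : Prop := β.1 ≤ α.1 ∧ β.2.1 ≤ α.2.1 ∧ β.2.2 ≤ α.2.2

/-- The multi-index binomial coefficient `binom(α,β) = Π binom(αᵢ,βᵢ)`. -/
def mbinom (α β : ℕ × ℕ × ℕ) : ℕ :=
  α.1.choose β.1 * α.2.1.choose β.2.1 * α.2.2.choose β.2.2

/-- `M_{r,α} = r^{|α|}(|α|+1)⁴/|α|!`. -/
noncomputable def Mcoef (r : ℝ) (α : ℕ × ℕ × ℕ) : ℝ :=
  r ^ msize α * ((msize α : ℝ) + 1) ^ 4 / (Nat.factorial (msize α) : ℝ)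

theorem choose_mul_le_aux (a b i j : ℕ) :
    a.choose i * b.choose j ≤ (a + b).choose (i + j) := by
  rw [Nat.add_choose_eq]
  exact Finset.single_le_sum (f := fun ij : ℕ × ℕ => a.choose ij.1 * b.choose ij.2)
    (fun _ _ => Nat.zero_le _) (Finset.HasAntidiagonal.mem_antidiagonal.2 (rfl : (i, j).1 + (i, j).2 = i + j))

theorem mbinom_le_aux (α β : ℕ × ℕ × ℕ) : mbinom α β ≤ (msize α).choose (msize β) :=
  (Nat.mul_le_mul_right _ (choose_mul_le_aux _ _ _ _)).trans (choose_mul_le_aux _ _ _ _)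

theorem main_aux (r : ℝ) (hr : 0 < r) (B k m : ℕ) (hk : 1 ≤ k)
    (hB : B ≤ (k + m).choose k) :
    (B : ℝ) * (((k + m : ℕ) : ℝ))⁻¹ *
      (r ^ (k + m) * (((k + m : ℕ) : ℝ) + 1) ^ 4 / (Nat.factorial (k + m) : ℝ)) /
      ((r ^ k * ((k : ℝ) + 1) ^ 4 / (Nat.factorial k : ℝ)) *
       (r ^ m * ((m : ℝ) + 1) ^ 4 / (Nat.factorial m : ℝ)))
      ≤ 8 / ((k : ℝ) + 1) ^ 4 + 8 / ((m : ℝ) + 1) ^ 4 := by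
  have h1 : (B : ℝ) * k.factorial * m.factorial ≤ (k + m).factorial := by
    have := Nat.add_choose_mul_factorial_mul_factorial k m
    rw [Nat.choose_symm_add] at hB
    rw [← this]
    push_cast
    gcongr
  have hf : (0 : ℝ) < (k + m).factorial := by positivity
  have hfk : (0 : ℝ) < k.factorial := by positivity
  have hfm : (0 : ℝ) < m.factorial := by positivity
  have h2 : (B : ℝ) * k.factorial * m.factorial / (k + m).factorial ≤ 1 := by
    rwa [div_le_one hf]
  have hn : (1 : ℝ) ≤ ((k + m : ℕ) : ℝ) := by exact_mod_cast (by omega : 1 ≤ k + m)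
  have h3 : (((k + m : ℕ) : ℝ))⁻¹ ≤ 1 := inv_le_one_of_one_le₀ hn
  have ha : (0 : ℝ) < (k : ℝ) + 1 := by positivity
  have hb : (0 : ℝ) < (m : ℝ) + 1 := by positivity
  have h4 : (((k + m : ℕ) : ℝ) + 1) ^ 4 ≤ 8 * (((k : ℝ) + 1) ^ 4 + ((m : ℝ) + 1) ^ 4) := by
    have e : (((k + m : ℕ) : ℝ) + 1) ≤ ((k : ℝ) + 1) + ((m : ℝ) + 1) := by
      push_cast; linarith
    calc _ ≤ (((k : ℝ) + 1) + ((m : ℝ) + 1)) ^ 4 := by gcongr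
      _ ≤ 2 ^ (4 - 1) * (((k : ℝ) + 1) ^ 4 + ((m : ℝ) + 1) ^ 4) :=
        add_pow_le ha.le hb.le 4
      _ = _ := by norm_num
  calc _ = ((B : ℝ) * k.factorial * m.factorial / (k + m).factorial) *
        (((k + m : ℕ) : ℝ))⁻¹ *
        ((((k + m : ℕ) : ℝ) + 1) ^ 4 / (((k : ℝ) + 1) ^ 4 * ((m : ℝ) + 1) ^ 4)) := by
        have hn0 : ((k + m : ℕ) : ℝ) ≠ 0 := by positivity
        generalize ((k + m : ℕ) : ℝ) = n at *
        rw [pow_add]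
        field_simp
    _ ≤ 1 * 1 * ((8 * (((k : ℝ) + 1) ^ 4 + ((m : ℝ) + 1) ^ 4)) /
          (((k : ℝ) + 1) ^ 4 * ((m : ℝ) + 1) ^ 4)) := by gcongr
    _ = _ := by field_simp; ring

theorem statement16 :
    ∃ C : ℝ, 0 < C ∧
      ∀ r : ℝ, 0 < r → r < 1 →
        ∀ α β : ℕ × ℕ × ℕ, mle β α → 1 ≤ α.2.2 → 1 ≤ β.2.2 →
          (mbinom α β : ℝ) * ((msize α : ℝ))⁻¹ * Mcoef r α /
              (Mcoef r (β.1, β.2.1 + 1, β.2.2 - 1) *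
                Mcoef r (α.1 - β.1, α.2.1 - β.2.1, α.2.2 - β.2.2))
            ≤ C / ((msize β : ℝ) + 1) ^ 4
              + C / ((msize α : ℝ) - (msize β : ℝ) + 1) ^ 4 := by
  refine ⟨8, by norm_num, ?_⟩
  intro r hr _ α β hle _ hβ
  obtain ⟨a1, a2, a3⟩ := α
  obtain ⟨b1, b2, b3⟩ := β
  obtain ⟨h1, h2, h3⟩ := hle
  have hB := mbinom_le_aux (a1, a2, a3) (b1, b2, b3)
  simp only [Mcoef] at *
  generalize mbinom (a1, a2, a3) (b1, b2, b3) = B at *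
  simp only [msize] at *
  have e1 : b1 + (b2 + 1) + (b3 - 1) = b1 + b2 + b3 := by omega
  have e2 : a1 + a2 + a3 = (b1 + b2 + b3) + (a1 - b1 + (a2 - b2) + (a3 - b3)) := by omega
  have hk : 1 ≤ b1 + b2 + b3 := by omega
  rw [e1]
  rw [e2] at hB ⊢
  generalize a1 - b1 + (a2 - b2) + (a3 - b3) = m at *
  generalize b1 + b2 + b3 = k at *
  have := main_aux r hr B k m hk hB
  have e3 : ((k + m : ℕ) : ℝ) - (k : ℝ) + 1 = (m : ℝ) + 1 := by push_cast; ring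
  rw [e3]
  exact this
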